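/- Let n ≥ 1 and let f_n : ℍ → ℍ be the n-fold ∗-power of q − i, explicitly f_n(q) = Σ_{k=0}^n binom(n,k)·qᵏ·(−i)^{n−k} (where i is the standard imaginary unit of ℍ). Then m_ℍ(f_n) = (2n/π)·∫₀^∞ t·coth(nt)·tanh²(t)·sech(t) dt − (n+2)/4. -/

import Mathlib

open MeasureTheory Quaternion

noncomputable instance : MeasurableSpace (Quaternion ℝ) := borel _
instance : BorelSpace (Quaternion ℝ) := ⟨rfl⟩
instance : Nonempty (Metric.sphere (0 : Quaternion ℝ) 1) := ⟨⟨1, by simp⟩⟩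

/-- The probability Haar measure `μ` on the group `T¹(ℍ)` of unit quaternions
(the Haar measure normalized so that the whole group has measure `1`). -/
noncomputable def muH : Measure (Metric.sphere (0 : Quaternion ℝ) 1) :=
  Measure.haarMeasure ⊤

/-- The quaternionic Mahler measure `m_ℍ(f) = ∫_{T¹(ℍ)} log |f(q)| dμ(q)`. -/
noncomputable def mahlerH (f : Quaternion ℝ → Quaternion ℝ) : ℝ :=
  ∫ q : Metric.sphere (0 : Quaternion ℝ) 1, Real.log ‖f q‖ ∂muH
/-- The standard imaginary unit `i` of the quaternions. -/
noncomputable def qI : Quaternion ℝ := ⟨0, 1, 0, 0⟩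
/-- The standard imaginary unit `j` of the quaternions. -/
noncomputable def qJ : Quaternion ℝ := ⟨0, 0, 1, 0⟩
/-- The standard imaginary unit `k` of the quaternions. -/
noncomputable def qK : Quaternion ℝ := ⟨0, 0, 0, 1⟩

/-! Write `f` for the `n`-th `∗`-power of `q - i`. By the representation formula, the value of `f`
at a unit quaternion `q` is a combination of its values at the complex numbers `re q ± s i` with
`s = ‖im q‖`, and
`‖f q‖² = (1 + a) / 2 * (2 - 2 s) ^ n + (1 - a) / 2 * (2 + 2 s) ^ n`,
where `a` is the `i`-coordinate of `im q / s`. If `re q = sin φ`, then `s = cos φ` and the Haar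
measure has density `π⁻¹ cos² φ` in `(φ, a) ∈ (-π/2, π/2) × (-1, 1)`. The substitution
`cos φ = tanh t` turns `‖f q‖²` into `(2 / cosh t) ^ n * (cosh (n t) - a sinh (n t))`, so that the
mean of `log ‖f q‖²` over `a` is `n log (2 / cosh t) + n t coth (n t) - 1`. Integrating over `φ`,
the middle term gives the integral in the formula, and, as `1 / cosh t = sin φ` and
`∫₀^{π/2} cos² φ log (2 sin φ) dφ = -π/8`, the other two terms give `-n/4` and `-1/2`. -/

section Slice

open Polynomial

@[simp] theorem re_qI : qI.re = 0 := rfl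

@[simp] theorem imI_qI : qI.imI = 1 := rfl

@[simp] theorem imJ_qI : qI.imJ = 0 := rfl

@[simp] theorem imK_qI : qI.imK = 0 := rfl

theorem coe_I_eq_qI : ((Complex.I : ℂ) : ℍ) = qI := by
  ext <;> simp

/-- The slice regular polynomial function `q ↦ Σ qᵏ aₖ` with coefficients `aₖ ∈ ℂ = ℝ + ℝi ⊆ ℍ`.
As these coefficients commute with each other, the `∗`-product of two such functions is given by
the ordinary product in `ℂ[X]`. -/
noncomputable def sliceEval (p : ℂ[X]) (q : ℍ) : ℍ :=
  p.sum fun k a => q ^ k * (a : ℍ)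

theorem sliceEval_add (p r : ℂ[X]) (q : ℍ) :
    sliceEval (p + r) q = sliceEval p q + sliceEval r q :=
  sum_add_index p r _ (by simp) fun k a b => by rw [coeComplex_add, mul_add]

theorem sliceEval_monomial (k : ℕ) (a : ℂ) (q : ℍ) :
    sliceEval (monomial k a) q = q ^ k * (a : ℍ) :=
  sum_monomial_index a _ (by simp)

theorem sliceEval_X_sub_C_I_pow (n : ℕ) (q : ℍ) :
    sliceEval ((X - C Complex.I) ^ n) q =
      ∑ k ∈ Finset.range (n + 1), (n.choose k : ℍ) * q ^ k * (-qI) ^ (n - k) := by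
  have hdeg : ((X - C Complex.I) ^ n).natDegree < n + 1 := by
    simp [natDegree_pow]
  rw [sliceEval, sum_over_range' _ (by simp) (n + 1) hdeg]
  refine Finset.sum_congr rfl fun k _ => ?_
  rw [sub_eq_add_neg, ← C_neg, coeff_X_add_C_pow, ← coe_ofComplex, map_mul, map_pow, map_neg,
    map_natCast, coe_ofComplex, coe_I_eq_qI, ← Nat.cast_comm, ← mul_assoc, ← Nat.cast_comm]

/-- The representation formula for slice regular functions. -/
theorem sliceEval_eq_smul_add {u : ℍ} (huu : u * u = -1) (p : ℂ[X]) (z : ℂ) :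
    sliceEval p (z.re + z.im * u) =
      (2⁻¹ : ℝ) • ((1 - u * qI) * (p.eval z : ℂ) +
        (1 + u * qI) * (p.eval (starRingEnd ℂ z) : ℂ)) := by
  let φ : ℂ →ₐ[ℝ] ℍ := Complex.lift ⟨u, huu⟩
  have hφ (ζ : ℂ) : φ ζ = ζ.re + ζ.im * u := by
    simp only [φ, Complex.lift_apply, Complex.liftAux_apply, Algebra.smul_def]
    rfl
  have hφ_slice (ζ : ℂ) : φ ζ = (2⁻¹ : ℝ) • ((1 - u * qI) * (ζ : ℍ) +
      (1 + u * qI) * ((starRingEnd ℂ ζ : ℂ) : ℍ)) := by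
    rw [hφ]
    ext <;> simp only [re_add, imI_add, imJ_add, imK_add, re_sub, imI_sub, imJ_sub, imK_sub, re_mul,
      imI_mul, imJ_mul, imK_mul, re_smul, imI_smul, imJ_smul, imK_smul, re_one, imI_one, imJ_one,
      imK_one, re_qI, imI_qI, imJ_qI, imK_qI, re_coeComplex, imI_coeComplex, imJ_coeComplex,
      imK_coeComplex, re_coe, imI_coe, imJ_coe, imK_coe, Complex.conj_re, Complex.conj_im,
      smul_eq_mul] <;> ring
  induction p using Polynomial.induction_on' with
  | add p r hp hr =>
    rw [sliceEval_add, hp, hr]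
    simp only [eval_add, coeComplex_add, mul_add]
    module
  | monomial k a =>
    rw [sliceEval_monomial, ← hφ, ← map_pow, hφ_slice, eval_monomial, eval_monomial, map_pow,
      mul_comm a, mul_comm a, coeComplex_mul, coeComplex_mul, smul_mul_assoc, add_mul, mul_assoc,
      mul_assoc]

theorem normSq_sliceEval {u : ℍ} (hre : u.re = 0) (hu : u.imI ^ 2 + u.imJ ^ 2 + u.imK ^ 2 = 1)
    (p : ℂ[X]) (z : ℂ) :
    normSq (sliceEval p (z.re + z.im * u)) =
      (1 + u.imI) / 2 * Complex.normSq (p.eval z) +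
        (1 - u.imI) / 2 * Complex.normSq (p.eval (starRingEnd ℂ z)) := by
  have huu : u * u = -1 := by
    ext <;> simp only [re_mul, imI_mul, imJ_mul, imK_mul, hre, re_neg, imI_neg, imJ_neg, imK_neg,
      re_one, imI_one, imJ_one, imK_one] <;> linarith
  rw [sliceEval_eq_smul_add huu, normSq_def', Complex.normSq_apply, Complex.normSq_apply]
  generalize p.eval z = X
  generalize p.eval (starRingEnd ℂ z) = Y
  simp only [re_add, imI_add, imJ_add, imK_add, re_sub, imI_sub, imJ_sub, imK_sub, re_mul,
    imI_mul, imJ_mul, imK_mul, re_smul, imI_smul, imJ_smul, imK_smul, re_one, imI_one, imJ_one,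
    imK_one, re_qI, imI_qI, imJ_qI, imK_qI, re_coeComplex, imI_coeComplex, imJ_coeComplex,
    imK_coeComplex, hre, smul_eq_mul]
  linear_combination
    (X.re ^ 2 + X.im ^ 2 + Y.re ^ 2 + Y.im ^ 2 - 2 * X.re * Y.re - 2 * X.im * Y.im) / 4 * hu

theorem norm_im_sq (q : ℍ) : ‖q.im‖ ^ 2 = q.imI ^ 2 + q.imJ ^ 2 + q.imK ^ 2 := by
  rw [sq, ← normSq_eq_norm_mul_self, normSq_def']
  simp

theorem re_sq_add_norm_im_sq (q : ℍ) : q.re ^ 2 + ‖q.im‖ ^ 2 = ‖q‖ ^ 2 := by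
  rw [norm_im_sq, ← add_assoc, ← add_assoc, ← normSq_def', normSq_eq_norm_mul_self, sq]

/-- At a real `q` the weights involve `0 / 0 = 0`, but there both evaluation points agree. -/
theorem normSq_sliceEval_eq_add (p : ℂ[X]) (q : ℍ) :
    normSq (sliceEval p q) =
      (1 + q.imI / ‖q.im‖) / 2 * Complex.normSq (p.eval ⟨q.re, ‖q.im‖⟩) +
        (1 - q.imI / ‖q.im‖) / 2 * Complex.normSq (p.eval (starRingEnd ℂ ⟨q.re, ‖q.im‖⟩)) := by
  rcases eq_or_ne q.im 0 with him | him
  · have hq : q = q.re + (0 : ℝ) * qI := by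
      rw [← re_add_im q, him]
      simp
    have h := normSq_sliceEval re_qI (by simp) p ⟨q.re, 0⟩
    simp only [← hq] at h
    have hconj : starRingEnd ℂ ⟨q.re, 0⟩ = ⟨q.re, 0⟩ := by simp [Complex.ext_iff]
    rw [h, him, norm_zero, div_zero, hconj, imI_qI]
    ring
  · have hs : ‖q.im‖ ≠ 0 := norm_ne_zero_iff.2 him
    set s := ‖q.im‖
    let u : ℍ := s⁻¹ • q.im
    have hu : u.imI ^ 2 + u.imJ ^ 2 + u.imK ^ 2 = 1 := by
      simp only [u, imI_smul, imJ_smul, imK_smul, imI_im, imJ_im, imK_im, smul_eq_mul]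
      field_simp
      rw [← norm_im_sq]
    have hq : q = q.re + s * u := by
      ext <;> simp [u, hs]
    have h := normSq_sliceEval (by simp [u]) hu p ⟨q.re, s⟩
    simp only [← hq] at h
    rw [h]
    simp [u, div_eq_inv_mul]

/-- The value of `‖f q‖ ^ 2` for `f = (q - i)^{∗n}` and `‖q‖ = 1`, as a function of `s = ‖q.im‖` and
of the `i`-coordinate `a` of `q.im / ‖q.im‖`. -/
noncomputable def starPowNormSq (n : ℕ) (s a : ℝ) : ℝ :=
  (1 + a) / 2 * (2 - 2 * s) ^ n + (1 - a) / 2 * (2 + 2 * s) ^ n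

theorem normSq_sliceEval_X_sub_C_I_pow (n : ℕ) {q : ℍ} (hq : ‖q‖ = 1) :
    normSq (sliceEval ((X - C Complex.I) ^ n) q) =
      starPowNormSq n ‖q.im‖ (q.imI / ‖q.im‖) := by
  have hsum : q.re ^ 2 + ‖q.im‖ ^ 2 = 1 := by
    rw [re_sq_add_norm_im_sq, hq, one_pow]
  rw [normSq_sliceEval_eq_add, starPowNormSq]
  simp only [eval_pow, eval_sub, eval_X, eval_C, map_pow, Complex.normSq_apply]
  congr 3 <;> simp only [Complex.sub_re, Complex.sub_im, Complex.conj_re, Complex.conj_im,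
    Complex.I_re, Complex.I_im, sub_zero] <;> linarith

end Slice

section UnitPart

/-- The direction `q / ‖q‖` of a quaternion, as a unit quaternion. The value `1` at `q = 0` is
junk. -/
noncomputable def unitPart (q : ℍ) : Metric.sphere (0 : ℍ) 1 :=
  open Classical in
  ⟨if q = 0 then 1 else ‖q‖⁻¹ • q, by split_ifs with hq <;> simp [norm_smul, hq]⟩

theorem coe_unitPart {q : ℍ} (hq : q ≠ 0) : (unitPart q : ℍ) = ‖q‖⁻¹ • q :=
  if_neg hq

theorem measurable_unitPart : Measurable unitPart :=
  (Measurable.ite (measurableSet_singleton 0) measurable_const (by fun_prop)).subtype_mk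

theorem unitPart_unit_mul (x : Metric.sphere (0 : ℍ) 1) {q : ℍ} (hq : q ≠ 0) :
    unitPart (x * q) = x * unitPart q := by
  have hx : ‖(x : ℍ)‖ = 1 := by simp
  have hxq : (x : ℍ) * q ≠ 0 := mul_ne_zero (by rw [← norm_ne_zero_iff, hx]; exact one_ne_zero) hq
  ext1
  rw [Metric.unitSphere.coe_mul, coe_unitPart hxq, coe_unitPart hq, norm_mul, hx, one_mul,
    mul_smul_comm]

theorem measurePreserving_unit_mul (x : Metric.sphere (0 : ℍ) 1) :
    MeasurePreserving (fun q : ℍ => (x : ℍ) * q) := by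
  let L : ℍ →ₗᵢ[ℝ] ℍ := ⟨LinearMap.mulLeft ℝ (x : ℍ), fun q => by simp⟩
  exact (L.toLinearIsometryEquiv rfl).measurePreserving

theorem isMulLeftInvariant_map_unitPart :
    ((volume.restrict (Metric.ball (0 : ℍ) 1)).map unitPart).IsMulLeftInvariant := by
  refine ⟨fun x => ?_⟩
  have hball : (fun q : ℍ => (x : ℍ) * q) ⁻¹' Metric.ball 0 1 = Metric.ball 0 1 := by
    ext q
    simp
  have hx := (measurePreserving_unit_mul x).restrict_preimage (s := Metric.ball 0 1)
    measurableSet_ball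
  rw [hball] at hx
  rw [Measure.map_map (by fun_prop) measurable_unitPart]
  conv_rhs => rw [← hx.map_eq, Measure.map_map measurable_unitPart hx.measurable]
  refine Measure.map_congr (ae_restrict_of_ae ?_)
  filter_upwards [Measure.ae_ne volume (0 : ℍ)] with q hq
  exact (unitPart_unit_mul x hq).symm

instance : IsProbabilityMeasure muH := ⟨Measure.haarMeasure_self (K₀ := ⊤)⟩

theorem exists_muH_eq_smul_map_unitPart :
    ∃ c : ENNReal, muH = c • (volume.restrict (Metric.ball (0 : ℍ) 1)).map unitPart := by
  have := isMulLeftInvariant_map_unitPart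
  have hball : volume (Metric.ball (0 : ℍ) 1) ≠ ⊤ := measure_ball_lt_top.ne
  have : IsFiniteMeasure ((volume.restrict (Metric.ball (0 : ℍ) 1)).map unitPart) := by
    have := isFiniteMeasure_restrict.2 hball
    infer_instance
  have huniv := Measure.map_apply (μ := volume.restrict (Metric.ball (0 : ℍ) 1))
    measurable_unitPart MeasurableSet.univ
  rw [Set.preimage_univ, Measure.restrict_apply_univ] at huniv
  have hν := Measure.haarMeasure_unique ((volume.restrict (Metric.ball (0 : ℍ) 1)).map unitPart) ⊤
  rw [TopologicalSpace.PositiveCompacts.coe_top, huniv] at hν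
  refine ⟨(volume (Metric.ball (0 : ℍ) 1))⁻¹, ?_⟩
  rw [hν, smul_smul, ENNReal.inv_mul_cancel (Metric.measure_ball_pos _ _ one_pos).ne' hball,
    one_smul]
  rfl

end UnitPart

section AddHaar

variable {E : Type*} [NormedAddCommGroup E] [NormedSpace ℝ E] [MeasurableSpace E] [BorelSpace E]
  [FiniteDimensional ℝ E]

theorem lintegral_eq_ofReal_pow_mul_lintegral_comp_smul (μ : Measure E) [μ.IsAddHaarMeasure]
    {r : ℝ} (hr : 0 < r) (f : E → ENNReal) :
    ∫⁻ x, f x ∂μ = ENNReal.ofReal (r ^ Module.finrank ℝ E) * ∫⁻ x, f (r • x) ∂μ := by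
  have hmap := lintegral_map_equiv f (Homeomorph.smulOfNeZero r hr.ne').toMeasurableEquiv (μ := μ)
  change ∫⁻ x, f x ∂μ.map (r • ·) = ∫⁻ x, f (r • x) ∂μ at hmap
  have hpos : 0 < r ^ Module.finrank ℝ E := by positivity
  rw [← hmap, Measure.map_addHaar_smul μ hr.ne', lintegral_smul_measure, smul_eq_mul, ← mul_assoc,
    abs_of_pos (inv_pos.2 hpos), ← ENNReal.ofReal_mul hpos.le, mul_inv_cancel₀ hpos.ne',
    ENNReal.ofReal_one, one_mul]

theorem setLIntegral_ball_norm_pow (μ : Measure E) [μ.IsAddHaarMeasure] (k : ℕ) {r : ℝ}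
    (hr : 0 < r) :
    ∫⁻ x in Metric.ball 0 r, ENNReal.ofReal (‖x‖ ^ k) ∂μ =
      ENNReal.ofReal (r ^ (Module.finrank ℝ E + k)) *
        ∫⁻ x in Metric.ball 0 1, ENNReal.ofReal (‖x‖ ^ k) ∂μ := by
  have hball (x : E) : r • x ∈ Metric.ball 0 r ↔ x ∈ Metric.ball 0 1 := by
    simp [norm_smul, abs_of_pos hr, hr]
  rw [← lintegral_indicator measurableSet_ball, ← lintegral_indicator measurableSet_ball,
    lintegral_eq_ofReal_pow_mul_lintegral_comp_smul μ hr, pow_add,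
    ENNReal.ofReal_mul (by positivity), mul_assoc,
    ← lintegral_const_mul' (ENNReal.ofReal (r ^ k)) _ ENNReal.ofReal_ne_top]
  refine congrArg _ (lintegral_congr fun x => ?_)
  by_cases hx : x ∈ Metric.ball 0 1
  · rw [Set.indicator_of_mem ((hball x).2 hx), Set.indicator_of_mem hx,
      ← ENNReal.ofReal_mul (by positivity), norm_smul, Real.norm_of_nonneg hr.le, mul_pow]
  · rw [Set.indicator_of_notMem (mt (hball x).1 hx), Set.indicator_of_notMem hx, mul_zero]

end AddHaar

section Latitudes

open Real

theorem lintegral_eq_lintegral_Ioo_comp_mul_tan {c : ℝ} (hc : 0 < c) (f : ℝ → ENNReal) :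
    ∫⁻ x, f x = ∫⁻ φ in Set.Ioo (-(π / 2)) (π / 2),
      ENNReal.ofReal (c / cos φ ^ 2) * f (c * tan φ) := by
  have himage : (fun φ => c * tan φ) '' Set.Ioo (-(π / 2)) (π / 2) = Set.univ := by
    rw [← Set.image_image (c * ·) tan, image_tan_Ioo]
    exact Set.image_univ_of_surjective (mul_left_surjective₀ hc.ne')
  have hderiv : ∀ φ ∈ Set.Ioo (-(π / 2)) (π / 2),
      HasDerivWithinAt (fun φ => c * tan φ) (c * (1 / cos φ ^ 2)) (Set.Ioo (-(π / 2)) (π / 2)) φ :=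
    fun φ hφ => ((hasDerivAt_tan (cos_pos_of_mem_Ioo hφ).ne').const_mul c).hasDerivWithinAt
  rw [← setLIntegral_univ, ← himage, lintegral_image_eq_lintegral_abs_deriv_mul measurableSet_Ioo
    hderiv ((mul_right_injective₀ hc.ne').comp_injOn injOn_tan)]
  refine setLIntegral_congr_fun measurableSet_Ioo fun φ _ => ?_
  rw [mul_one_div, abs_of_nonneg (by positivity)]

/-- The coordinates `(k + l i, b, a) ↦ a + b i + k j + l k` on `ℍ`. -/
noncomputable def complexProdProdEquiv : (ℂ × ℝ × ℝ) ≃L[ℝ] ℍ :=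
  LinearEquiv.toContinuousLinearEquiv
    { toFun := fun x => ⟨x.2.2, x.2.1, x.1.re, x.1.im⟩
      invFun := fun q => (⟨q.imJ, q.imK⟩, q.imI, q.re)
      map_add' := fun _ _ => rfl
      map_smul' := fun _ _ => by ext <;> simp <;> rfl
      left_inv := fun _ => rfl
      right_inv := fun _ => rfl }

/-- The orthogonal projection of `ℍ` onto the plane `ℝ + ℝi`. -/
def reImI (q : ℍ) : ℝ × ℝ := (q.re, q.imI)

theorem measurable_reImI : Measurable reImI :=
  (continuous_re.prodMk continuous_imI).measurable

theorem exists_volume_eq_smul_map_complexProdProdEquiv :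
    ∃ c : NNReal, (volume : Measure ℍ) =
      c • (volume : Measure (ℂ × ℝ × ℝ)).map complexProdProdEquiv := by
  have : (volume : Measure (ℂ × ℝ × ℝ)).IsAddHaarMeasure := by
    have : (volume : Measure (ℝ × ℝ)).IsAddHaarMeasure := Measure.prod.instIsAddHaarMeasure _ _
    exact Measure.prod.instIsAddHaarMeasure _ _
  exact ⟨_, Measure.isAddLeftInvariant_eq_smul _ _⟩

theorem lintegral_eq_setLIntegral_comp_mul_tan_prod {r : ℝ} (hr : 0 < r) {f : ℝ × ℝ → ENNReal}
    (hf : Measurable f) :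
    ∫⁻ y, f y = ∫⁻ x in Set.Ioo (-(π / 2)) (π / 2) ×ˢ Set.Ioo (-(π / 2)) (π / 2),
      ENNReal.ofReal (r ^ 2 / (cos x.1 ^ 2 * cos x.2 ^ 3)) *
        f (r * tan x.2, r / cos x.2 * tan x.1) := by
  have htan : Measurable tan := by
    rw [funext tan_eq_sin_div_cos]
    fun_prop
  rw [Measure.volume_eq_prod, lintegral_prod _ hf.aemeasurable, ← Measure.prod_restrict,
    lintegral_prod_symm _ (by fun_prop), lintegral_eq_lintegral_Ioo_comp_mul_tan hr]
  refine setLIntegral_congr_fun measurableSet_Ioo fun ψ hψ => ?_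
  have hcos : 0 < cos ψ := cos_pos_of_mem_Ioo hψ
  rw [lintegral_eq_lintegral_Ioo_comp_mul_tan (div_pos hr hcos),
    ← lintegral_const_mul' _ _ ENNReal.ofReal_ne_top]
  refine lintegral_congr fun φ => ?_
  rw [← mul_assoc, ← ENNReal.ofReal_mul (by positivity)]
  congr 2
  field_simp

/-- The coordinates are chosen so that the direction of the quaternion is
`sin φ + cos φ sin ψ i + …`. -/
theorem norm_complexProdProdEquiv_tan (w : ℂ) {φ ψ : ℝ} (hφ : φ ∈ Set.Ioo (-(π / 2)) (π / 2))
    (hψ : ψ ∈ Set.Ioo (-(π / 2)) (π / 2)) :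
    ‖complexProdProdEquiv (w, ‖w‖ * tan ψ, ‖w‖ / cos ψ * tan φ)‖ = ‖w‖ / (cos φ * cos ψ) := by
  have hcosφ : 0 < cos φ := cos_pos_of_mem_Ioo hφ
  have hcosψ : 0 < cos ψ := cos_pos_of_mem_Ioo hψ
  rw [← sq_eq_sq₀ (norm_nonneg _) (by positivity), sq, ← normSq_eq_norm_mul_self, normSq_def']
  change (‖w‖ / cos ψ * tan φ) ^ 2 + (‖w‖ * tan ψ) ^ 2 + w.re ^ 2 + w.im ^ 2 = _
  have hw : w.re ^ 2 + w.im ^ 2 = ‖w‖ ^ 2 := by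
    rw [← Complex.normSq_eq_norm_sq, Complex.normSq_apply, sq, sq]
  rw [add_assoc, hw, tan_eq_sin_div_cos, tan_eq_sin_div_cos]
  field_simp
  rw [sin_sq, sin_sq]
  ring

theorem reImI_unitPart_complexProdProdEquiv_tan {w : ℂ} (hw : w ≠ 0) {φ ψ : ℝ}
    (hφ : φ ∈ Set.Ioo (-(π / 2)) (π / 2)) (hψ : ψ ∈ Set.Ioo (-(π / 2)) (π / 2)) :
    reImI (unitPart (complexProdProdEquiv (w, ‖w‖ * tan ψ, ‖w‖ / cos ψ * tan φ))) =
      (sin φ, cos φ * sin ψ) := by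
  have hcosφ : 0 < cos φ := cos_pos_of_mem_Ioo hφ
  have hcosψ : 0 < cos ψ := cos_pos_of_mem_Ioo hψ
  have hnorm := norm_complexProdProdEquiv_tan w hφ hψ
  have : 0 < ‖w‖ := norm_pos_iff.2 hw
  rw [coe_unitPart (norm_pos_iff.1 (by rw [hnorm]; positivity)), hnorm]
  refine Prod.ext ?_ ?_
  · change (‖w‖ / (cos φ * cos ψ))⁻¹ * (‖w‖ / cos ψ * tan φ) = sin φ
    rw [tan_eq_sin_div_cos]
    field_simp
  · change (‖w‖ / (cos φ * cos ψ))⁻¹ * (‖w‖ * tan ψ) = cos φ * sin ψ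
    rw [tan_eq_sin_div_cos]
    field_simp

theorem lintegral_indicator_ball_complexProdProdEquiv {w : ℂ} (hw : w ≠ 0) {f : ℝ × ℝ → ENNReal}
    (hf : Measurable f) :
    ∫⁻ y, (Metric.ball (0 : ℍ) 1).indicator (fun q => f (reImI (unitPart q)))
        (complexProdProdEquiv (w, y)) =
      ∫⁻ x in Set.Ioo (-(π / 2)) (π / 2) ×ˢ Set.Ioo (-(π / 2)) (π / 2),
        (Metric.ball 0 (cos x.1 * cos x.2)).indicator (fun w => ENNReal.ofReal (‖w‖ ^ 2)) w *
          (ENNReal.ofReal (cos x.1 ^ 2 * cos x.2 ^ 3)⁻¹ * f (sin x.1, cos x.1 * sin x.2)) := by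
  rw [lintegral_eq_setLIntegral_comp_mul_tan_prod (norm_pos_iff.2 hw)]
  · refine setLIntegral_congr_fun (measurableSet_Ioo.prod measurableSet_Ioo) fun x hx => ?_
    have hcos : 0 < cos x.1 * cos x.2 :=
      mul_pos (cos_pos_of_mem_Ioo hx.1) (cos_pos_of_mem_Ioo hx.2)
    have hmem : complexProdProdEquiv (w, ‖w‖ * tan x.2, ‖w‖ / cos x.2 * tan x.1) ∈
        Metric.ball (0 : ℍ) 1 ↔ w ∈ Metric.ball 0 (cos x.1 * cos x.2) := by
      rw [mem_ball_zero_iff, mem_ball_zero_iff, norm_complexProdProdEquiv_tan w hx.1 hx.2,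
        div_lt_one hcos]
    by_cases hball : w ∈ Metric.ball 0 (cos x.1 * cos x.2)
    · rw [Set.indicator_of_mem (hmem.2 hball), Set.indicator_of_mem hball,
        reImI_unitPart_complexProdProdEquiv_tan hw hx.1 hx.2, ← mul_assoc,
        ← ENNReal.ofReal_mul (by positivity), div_eq_mul_inv]
    · rw [Set.indicator_of_notMem (mt hmem.1 hball), Set.indicator_of_notMem hball, mul_zero,
        zero_mul]
  · exact ((hf.comp (measurable_reImI.comp measurable_unitPart.subtype_val)).indicator
      measurableSet_ball).comp (by fun_prop)

theorem lintegral_indicator_ball_mul {x : ℝ × ℝ}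
    (hx : x ∈ Set.Ioo (-(π / 2)) (π / 2) ×ˢ Set.Ioo (-(π / 2)) (π / 2)) (y : ENNReal) :
    ∫⁻ w : ℂ, (Metric.ball 0 (cos x.1 * cos x.2)).indicator
        (fun w => ENNReal.ofReal (‖w‖ ^ 2)) w *
          (ENNReal.ofReal (cos x.1 ^ 2 * cos x.2 ^ 3)⁻¹ * y) =
      (∫⁻ w in Metric.ball (0 : ℂ) 1, ENNReal.ofReal (‖w‖ ^ 2)) *
        (ENNReal.ofReal (cos x.1 ^ 2 * cos x.2) * y) := by
  have hcos1 := cos_pos_of_mem_Ioo hx.1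
  have hcos2 := cos_pos_of_mem_Ioo hx.2
  have hcos : ENNReal.ofReal (cos x.1 ^ 2 * cos x.2) =
      ENNReal.ofReal ((cos x.1 * cos x.2) ^ (2 + 2)) *
        ENNReal.ofReal (cos x.1 ^ 2 * cos x.2 ^ 3)⁻¹ := by
    rw [← ENNReal.ofReal_mul (by positivity)]
    congr 1
    field_simp
    ring
  rw [lintegral_mul_const _ (by measurability), lintegral_indicator measurableSet_ball,
    setLIntegral_ball_norm_pow _ _ (mul_pos hcos1 hcos2), Complex.finrank_real_complex, hcos]
  ring

theorem measurable_indicator_ball_cos_mul_cos :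
    Measurable fun p : ℂ × ℝ × ℝ => (Metric.ball 0 (cos p.2.1 * cos p.2.2)).indicator
      (fun w => ENNReal.ofReal (‖w‖ ^ 2)) p.1 := by
  refine Measurable.ite ?_ (by fun_prop) measurable_const
  simp only [mem_ball_zero_iff]
  exact measurableSet_lt (by fun_prop) (by fun_prop)

theorem exists_lintegral_reImI_muH :
    ∃ c : ENNReal, ∀ f : ℝ × ℝ → ENNReal, Measurable f →
      ∫⁻ q, f (reImI q) ∂muH =
        c * ∫⁻ x in Set.Ioo (-(π / 2)) (π / 2) ×ˢ Set.Ioo (-(π / 2)) (π / 2),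
          ENNReal.ofReal (cos x.1 ^ 2 * cos x.2) * f (sin x.1, cos x.1 * sin x.2) := by
  obtain ⟨c, hc⟩ := exists_muH_eq_smul_map_unitPart
  obtain ⟨d, hd⟩ := exists_volume_eq_smul_map_complexProdProdEquiv
  refine ⟨c * (d * ∫⁻ w in Metric.ball (0 : ℂ) 1, ENNReal.ofReal (‖w‖ ^ 2)), fun f hf => ?_⟩
  have hf_sphere : Measurable fun q : Metric.sphere (0 : ℍ) 1 => f (reImI q) :=
    hf.comp (measurable_reImI.comp measurable_subtype_coe)
  have hF : Measurable ((Metric.ball (0 : ℍ) 1).indicator fun q => f (reImI (unitPart q))) :=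
    (hf_sphere.comp measurable_unitPart).indicator measurableSet_ball
  rw [hc, lintegral_smul_measure, lintegral_map hf_sphere measurable_unitPart,
    ← lintegral_indicator measurableSet_ball, hd, lintegral_smul_measure,
    lintegral_map hF complexProdProdEquiv.continuous.measurable, Measure.volume_eq_prod,
    lintegral_prod _ (by fun_prop)]
  have hw : ∀ᵐ w : ℂ, w ≠ 0 := Measure.ae_ne volume 0
  have hmeas : Measurable (Function.uncurry fun (w : ℂ) (x : ℝ × ℝ) =>
      (Metric.ball 0 (cos x.1 * cos x.2)).indicator (fun w => ENNReal.ofReal (‖w‖ ^ 2)) w *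
        (ENNReal.ofReal (cos x.1 ^ 2 * cos x.2 ^ 3)⁻¹ * f (sin x.1, cos x.1 * sin x.2))) :=
    measurable_indicator_ball_cos_mul_cos.mul (by fun_prop)
  rw [lintegral_congr_ae (hw.mono fun w hw => lintegral_indicator_ball_complexProdProdEquiv hw hf),
    lintegral_lintegral_swap hmeas.aemeasurable,
    setLIntegral_congr_fun (measurableSet_Ioo.prod measurableSet_Ioo)
      fun x hx => lintegral_indicator_ball_mul hx _,
    lintegral_const_mul _ (by fun_prop), ENNReal.smul_def, smul_eq_mul, smul_eq_mul, mul_assoc,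
    mul_assoc]

theorem setLIntegral_prod_Ioo_comp_sin {s : Set ℝ} {f : ℝ × ℝ → ENNReal}
    (hf : Measurable f) :
    ∫⁻ x in s ×ˢ Set.Ioo (-(π / 2)) (π / 2), ENNReal.ofReal (cos x.2) * f (x.1, sin x.2) =
      ∫⁻ x in s ×ˢ Set.Ioo (-1) 1, f x := by
  have himage : sin '' Set.Ioo (-(π / 2)) (π / 2) = Set.Ioo (-1) 1 :=
    sinPartialHomeomorph.image_source_eq_target
  rw [Measure.volume_eq_prod, ← Measure.prod_restrict, ← Measure.prod_restrict,
    lintegral_prod _ (by fun_prop), lintegral_prod _ hf.aemeasurable]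
  refine lintegral_congr fun φ => ?_
  rw [← himage, lintegral_image_eq_lintegral_abs_deriv_mul measurableSet_Ioo
    (fun ψ _ => (hasDerivAt_sin ψ).hasDerivWithinAt) (injOn_sin.mono Set.Ioo_subset_Icc_self)]
  refine setLIntegral_congr_fun measurableSet_Ioo fun ψ hψ => ?_
  rw [abs_of_pos (cos_pos_of_mem_Ioo hψ)]

theorem setLIntegral_prod_Ioo_cos_sq :
    ∫⁻ x in Set.Ioo (-(π / 2)) (π / 2) ×ˢ Set.Ioo (-1 : ℝ) 1, ENNReal.ofReal (cos x.1 ^ 2) =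
      ENNReal.ofReal π := by
  have hcos : ∫⁻ φ in Set.Ioo (-(π / 2)) (π / 2), ENNReal.ofReal (cos φ ^ 2) =
      ENNReal.ofReal (π / 2) := by
    rw [← ofReal_integral_eq_lintegral_ofReal
        ((Continuous.integrableOn_Icc (by fun_prop)).mono_set Set.Ioo_subset_Icc_self)
        (ae_of_all _ fun φ => sq_nonneg _),
      ← integral_Ioc_eq_integral_Ioo, ← intervalIntegral.integral_of_le (by linarith [pi_pos]),
      integral_cos_sq]
    simp
  rw [Measure.volume_eq_prod, ← Measure.prod_restrict, lintegral_prod _ (by fun_prop)]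
  simp only [lintegral_const, Measure.restrict_apply_univ, volume_Ioo]
  rw [lintegral_mul_const _ (by fun_prop), hcos, ← ENNReal.ofReal_mul (by positivity)]
  congr 1
  ring

theorem lintegral_reImI_muH {f : ℝ × ℝ → ENNReal} (hf : Measurable f) :
    ∫⁻ q, f (reImI q) ∂muH = ENNReal.ofReal π⁻¹ *
      ∫⁻ x in Set.Ioo (-(π / 2)) (π / 2) ×ˢ Set.Ioo (-1) 1,
        ENNReal.ofReal (cos x.1 ^ 2) * f (sin x.1, cos x.1 * x.2) := by
  obtain ⟨c, hc⟩ := exists_lintegral_reImI_muH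
  have hsin {f : ℝ × ℝ → ENNReal} (hf : Measurable f) : ∫⁻ q, f (reImI q) ∂muH =
      c * ∫⁻ x in Set.Ioo (-(π / 2)) (π / 2) ×ˢ Set.Ioo (-1) 1,
        ENNReal.ofReal (cos x.1 ^ 2) * f (sin x.1, cos x.1 * x.2) := by
    rw [hc f hf, ← setLIntegral_prod_Ioo_comp_sin (by fun_prop)]
    refine congrArg _ (setLIntegral_congr_fun (measurableSet_Ioo.prod measurableSet_Ioo)
      fun x hx => ?_)
    rw [mul_comm (cos x.1 ^ 2), ENNReal.ofReal_mul (cos_pos_of_mem_Ioo hx.2).le, mul_assoc]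
  have hmass := hsin (f := fun _ => 1) measurable_const
  simp only [mul_one, lintegral_one, measure_univ, setLIntegral_prod_Ioo_cos_sq] at hmass
  rw [hsin hf, ENNReal.ofReal_inv_of_pos pi_pos, ENNReal.eq_inv_of_mul_eq_one_left hmass.symm]

theorem integral_reImI_muH {f : ℝ × ℝ → ℝ} (hf : Measurable f) :
    ∫ q, f (reImI q) ∂muH = π⁻¹ *
      ∫ x in Set.Ioo (-(π / 2)) (π / 2) ×ˢ Set.Ioo (-1) 1,
        cos x.1 ^ 2 * f (sin x.1, cos x.1 * x.2) := by
  have hreImI : Measurable fun q : Metric.sphere (0 : ℍ) 1 => reImI q :=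
    measurable_reImI.comp measurable_subtype_coe
  have hmap : muH.map (fun q : Metric.sphere (0 : ℍ) 1 => reImI q) = ENNReal.ofReal π⁻¹ •
      (((volume : Measure (ℝ × ℝ)).restrict (Set.Ioo (-(π / 2)) (π / 2) ×ˢ Set.Ioo (-1) 1))
        |>.withDensity fun x => ENNReal.ofReal (cos x.1 ^ 2)).map
          fun x => (sin x.1, cos x.1 * x.2) := by
    refine Measure.ext_of_lintegral _ fun g hg => ?_
    rw [lintegral_map hg hreImI, lintegral_reImI_muH hg, lintegral_smul_measure,
      lintegral_map hg (by fun_prop), lintegral_withDensity_eq_lintegral_mul _ (by fun_prop)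
        (by fun_prop)]
    rfl
  rw [← integral_map (φ := fun q : Metric.sphere (0 : ℍ) 1 => reImI q) hreImI.aemeasurable
      hf.aestronglyMeasurable, hmap, integral_smul_measure,
    ENNReal.toReal_ofReal (by positivity), smul_eq_mul,
    integral_map (by fun_prop) hf.aestronglyMeasurable,
    integral_withDensity_eq_integral_toReal_smul (by fun_prop) (by simp)]
  simp only [ENNReal.toReal_ofReal (sq_nonneg _), smul_eq_mul]

end Latitudes

section LogMean

open Real

theorem abs_sinh_lt_cosh (x : ℝ) : |sinh x| < cosh x :=
  abs_lt_of_sq_lt_sq (by rw [cosh_sq]; exact lt_add_one _) (cosh_pos x).le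

theorem cosh_sub_mul_sinh_pos {a : ℝ} (ha : |a| ≤ 1) (x : ℝ) : 0 < cosh x - a * sinh x := by
  have h : a * sinh x ≤ |sinh x| := by
    calc a * sinh x ≤ |a| * |sinh x| := by rw [← abs_mul]; exact le_abs_self _
      _ ≤ |sinh x| := mul_le_of_le_one_left (abs_nonneg _) ha
  linarith [abs_sinh_lt_cosh x]

theorem integral_log_cosh_sub_mul_sinh {x : ℝ} (hx : x ≠ 0) :
    ∫ a in (-1)..1, log (cosh x - a * sinh x) = 2 * (x * (cosh x / sinh x) - 1) := by
  have hsinh : sinh x ≠ 0 := sinh_ne_zero.2 hx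
  simp only [mul_comm _ (sinh x)]
  rw [intervalIntegral.integral_comp_sub_mul log hsinh, mul_neg_one, sub_neg_eq_add, mul_one,
    cosh_sub_sinh, cosh_add_sinh, integral_log, log_exp, log_exp, smul_eq_mul,
    ← cosh_add_sinh x, ← cosh_sub_sinh x]
  field_simp
  ring

theorem starPowNormSq_tanh (n : ℕ) (t a : ℝ) :
    starPowNormSq n (tanh t) a = (2 / cosh t) ^ n * (cosh (n * t) - a * sinh (n * t)) := by
  have hcosh := (cosh_pos t).ne'
  have hsub : 2 - 2 * tanh t = 2 / cosh t * exp (-t) := by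
    rw [tanh_eq_sinh_div_cosh, ← cosh_sub_sinh]
    field_simp
  have hadd : 2 + 2 * tanh t = 2 / cosh t * exp t := by
    rw [tanh_eq_sinh_div_cosh, ← cosh_add_sinh]
    field_simp
  rw [starPowNormSq, hsub, hadd, mul_pow, mul_pow, ← exp_nat_mul, ← exp_nat_mul, mul_neg,
    ← cosh_sub_sinh, ← cosh_add_sinh]
  ring

/-- The mean of `log (‖f q‖ ^ 2)` for `f = (q - i)^{∗n}` over the unit quaternions `q` with
`‖q.im‖ = s` and given real part: by Archimedes' theorem the `i`-coordinate of `q.im / ‖q.im‖` is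
uniformly distributed in `[-1, 1]`. -/
noncomputable def logMeanStarPow (n : ℕ) (s : ℝ) : ℝ :=
  2⁻¹ * ∫ a in (-1)..1, log (starPowNormSq n s a)

theorem logMeanStarPow_tanh {n : ℕ} (hn : n ≠ 0) {t : ℝ} (ht : t ≠ 0) :
    logMeanStarPow n (tanh t) =
      n * log (2 / cosh t) + n * (t * (cosh (n * t) / sinh (n * t))) - 1 := by
  have := cosh_pos t
  have hpos : ∀ a ∈ Set.uIcc (-1 : ℝ) 1, 0 < cosh (n * t) - a * sinh (n * t) := fun a ha => by
    rw [Set.uIcc_of_le (by norm_num)] at ha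
    exact cosh_sub_mul_sinh_pos (abs_le.2 ha) _
  have hlog : Set.EqOn (fun a => log (starPowNormSq n (tanh t) a))
      (fun a => n * log (2 / cosh t) + log (cosh (n * t) - a * sinh (n * t)))
      (Set.uIcc (-1) 1) := fun a ha => by
    dsimp only
    rw [← log_pow, ← log_mul (by positivity) (hpos a ha).ne', starPowNormSq_tanh]
  have hcont : ContinuousOn (fun a => log (cosh (n * t) - a * sinh (n * t))) (Set.uIcc (-1) 1) :=
    ContinuousOn.log (by fun_prop) fun a ha => (hpos a ha).ne'
  rw [logMeanStarPow, intervalIntegral.integral_congr hlog,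
    intervalIntegral.integral_add intervalIntegrable_const hcont.intervalIntegrable,
    integral_log_cosh_sub_mul_sinh (mul_ne_zero (Nat.cast_ne_zero.2 hn) ht),
    intervalIntegral.integral_const, smul_eq_mul]
  ring

end LogMean

section ParallelAngle

open Real

/-- Lobachevsky's angle of parallelism, the complement of the Gudermannian function. It
parametrizes latitudes by `cos φ = tanh t`. -/
noncomputable def parallelAngle (t : ℝ) : ℝ :=
  π / 2 - arctan (sinh t)

theorem cos_parallelAngle (t : ℝ) : cos (parallelAngle t) = tanh t := by
  rw [parallelAngle, cos_pi_div_two_sub, sin_arctan, add_comm, ← cosh_sq, sqrt_sq (cosh_pos t).le,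
    tanh_eq_sinh_div_cosh]

theorem sin_parallelAngle (t : ℝ) : sin (parallelAngle t) = 1 / cosh t := by
  rw [parallelAngle, sin_pi_div_two_sub, cos_arctan, add_comm, ← cosh_sq, sqrt_sq (cosh_pos t).le]

theorem hasDerivAt_parallelAngle (t : ℝ) : HasDerivAt parallelAngle (-(1 / cosh t)) t := by
  refine ((hasDerivAt_sinh t).arctan.const_sub (π / 2)).congr_deriv ?_
  rw [add_comm, ← cosh_sq]
  field_simp

theorem parallelAngle_injective : Function.Injective parallelAngle :=
  sub_right_injective.comp (arctan_injective.comp sinh_injective)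

theorem image_parallelAngle_Ioi_zero : parallelAngle '' Set.Ioi 0 = Set.Ioo 0 (π / 2) := by
  ext φ
  constructor
  · rintro ⟨t, ht, rfl⟩
    exact ⟨sub_pos.2 (arctan_lt_pi_div_two _),
      sub_lt_self _ (arctan_pos.2 (sinh_pos_iff.2 ht))⟩
  · rintro ⟨hφ_pos, hφ_lt⟩
    refine ⟨arsinh (tan (π / 2 - φ)), arsinh_pos_iff.2
      (tan_pos_of_pos_of_lt_pi_div_two (by linarith) (by linarith)), ?_⟩
    rw [parallelAngle, sinh_arsinh, arctan_tan (by linarith) (by linarith), sub_sub_cancel]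

theorem setIntegral_Ioo_zero_pi_div_two_eq_setIntegral_Ioi (f : ℝ → ℝ) :
    ∫ φ in Set.Ioo 0 (π / 2), f φ = ∫ t in Set.Ioi 0, 1 / cosh t * f (parallelAngle t) := by
  rw [← image_parallelAngle_Ioi_zero, integral_image_eq_integral_abs_deriv_smul measurableSet_Ioi
    (fun t _ => (hasDerivAt_parallelAngle t).hasDerivWithinAt) parallelAngle_injective.injOn]
  refine setIntegral_congr_fun measurableSet_Ioi fun t _ => ?_
  have := cosh_pos t
  rw [abs_neg, abs_of_pos (by positivity), smul_eq_mul]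

end ParallelAngle

section LogSin

open Real

theorem intervalIntegrable_log_two_mul_sin (a b : ℝ) :
    IntervalIntegrable (fun φ => log (2 * sin φ)) volume a b :=
  MeromorphicOn.intervalIntegrable_log (f := fun φ => 2 * sin φ) fun _ _ => by fun_prop

theorem integral_log_two_mul_sin : ∫ φ in (0)..(π / 2), log (2 * sin φ) = 0 := by
  have hlog : Set.EqOn (fun φ => log (2 * sin φ)) (fun φ => log 2 + log (sin φ))
      (Set.Ioo 0 (π / 2)) := fun φ hφ =>
    log_mul two_ne_zero (sin_pos_of_pos_of_lt_pi hφ.1 (by linarith [hφ.2, pi_pos])).ne'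
  rw [intervalIntegral.integral_congr_Ioo_of_le (by positivity) hlog,
    intervalIntegral.integral_add intervalIntegrable_const
      (f := fun _ => log 2) (g := fun φ => log (sin φ)) intervalIntegrable_log_sin,
    integral_log_sin_zero_pi_div_two, intervalIntegral.integral_const, smul_eq_mul]
  ring

theorem intervalIntegrable_cos_sq_mul_log_two_mul_sin (a b : ℝ) :
    IntervalIntegrable (fun φ => cos φ ^ 2 * log (2 * sin φ)) volume a b :=
  (intervalIntegrable_log_two_mul_sin a b).continuousOn_mul (by fun_prop)

theorem intervalIntegrable_cos_sq (a b : ℝ) :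
    IntervalIntegrable (fun φ => cos φ ^ 2) volume a b :=
  Continuous.intervalIntegrable (by fun_prop) a b

/-- The integrand is half of the derivative of `sin φ cos φ log (2 sin φ)`, up to
`log (2 sin φ) / 2`, which has integral zero, and `cos² φ / 2`. -/
theorem integral_cos_sq_mul_log_two_mul_sin :
    ∫ φ in (0)..(π / 2), cos φ ^ 2 * log (2 * sin φ) = -π / 8 := by
  have hcont : Continuous fun φ => cos φ * (2 * sin φ * log (2 * sin φ)) :=
    continuous_cos.mul (continuous_mul_log.comp (by fun_prop))
  have hlog := intervalIntegrable_log_two_mul_sin 0 (π / 2)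
  have hcos_log := intervalIntegrable_cos_sq_mul_log_two_mul_sin 0 (π / 2)
  have hcos := intervalIntegrable_cos_sq 0 (π / 2)
  have hderiv : ∀ φ ∈ Set.Ioo 0 (π / 2),
      HasDerivAt (fun φ => cos φ * (2 * sin φ * log (2 * sin φ)))
        (4 * (cos φ ^ 2 * log (2 * sin φ)) - 2 * log (2 * sin φ) + 2 * cos φ ^ 2) φ := by
    intro φ hφ
    have hsin : 0 < sin φ := sin_pos_of_pos_of_lt_pi hφ.1 (by linarith [hφ.2, pi_pos])
    have hmul := (hasDerivAt_sin φ).const_mul 2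
    refine ((hasDerivAt_cos φ).mul (hmul.mul (hmul.log (by positivity)))).congr_deriv ?_
    simp only [Pi.mul_apply]
    field_simp
    rw [sin_sq]
    ring
  have hzero := intervalIntegral.integral_eq_sub_of_hasDerivAt_of_le (by positivity)
    hcont.continuousOn hderiv
    (((hcos_log.const_mul 4).sub (hlog.const_mul 2)).add (hcos.const_mul 2))
  rw [intervalIntegral.integral_add ((hcos_log.const_mul 4).sub (hlog.const_mul 2))
      (hcos.const_mul 2),
    intervalIntegral.integral_sub (hcos_log.const_mul 4) (hlog.const_mul 2)] at hzero
  simp only [intervalIntegral.integral_const_mul, integral_log_two_mul_sin, integral_cos_sq,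
    cos_pi_div_two, sin_zero, zero_mul, mul_zero, sub_zero, zero_add] at hzero
  linarith

end LogSin

section Mahler

open Real Polynomial

theorem log_norm_sliceEval_X_sub_C_I_pow (n : ℕ) {q : ℍ} (hq : ‖q‖ = 1) :
    log ‖sliceEval ((X - C Complex.I) ^ n) q‖ =
      2⁻¹ * log (starPowNormSq n √(1 - q.re ^ 2) (q.imI / √(1 - q.re ^ 2))) := by
  have him : √(1 - q.re ^ 2) = ‖q.im‖ := by
    rw [← sqrt_sq (norm_nonneg q.im), eq_sub_of_add_eq' (re_sq_add_norm_im_sq q), hq, one_pow]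
  rw [him, ← normSq_sliceEval_X_sub_C_I_pow n hq, normSq_eq_norm_mul_self, ← sq, log_pow,
    Nat.cast_ofNat, inv_mul_cancel_left₀ two_ne_zero]

theorem integrableOn_log_one_sub : IntegrableOn (fun a : ℝ => log (1 - a)) (Set.Ioo (-1) 1) := by
  rw [← intervalIntegrable_iff_integrableOn_Ioo_of_le (by norm_num)]
  exact MeromorphicOn.intervalIntegrable_log (f := fun a => 1 - a) fun _ _ => by fun_prop

theorem starPowNormSq_le {n : ℕ} {s a : ℝ} (hs : s ∈ Set.Icc 0 1) (ha : a ∈ Set.Icc (-1) 1) :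
    starPowNormSq n s a ≤ 4 ^ n := by
  have hsub : (2 - 2 * s) ^ n ≤ 4 ^ n :=
    pow_le_pow_left₀ (by linarith [hs.2]) (by linarith [hs.1]) n
  have hadd : (2 + 2 * s) ^ n ≤ 4 ^ n :=
    pow_le_pow_left₀ (by linarith [hs.1]) (by linarith [hs.2]) n
  calc starPowNormSq n s a ≤ (1 + a) / 2 * 4 ^ n + (1 - a) / 2 * 4 ^ n :=
        add_le_add (mul_le_mul_of_nonneg_left hsub (by linarith [ha.1]))
          (mul_le_mul_of_nonneg_left hadd (by linarith [ha.2]))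
    _ = 4 ^ n := by ring

theorem one_sub_div_two_le_starPowNormSq {n : ℕ} {s a : ℝ} (hs : s ∈ Set.Icc 0 1)
    (ha : a ∈ Set.Icc (-1) 1) : (1 - a) / 2 ≤ starPowNormSq n s a := by
  have hsub : 0 ≤ (2 - 2 * s) ^ n := pow_nonneg (by linarith [hs.2]) n
  have hadd : 1 ≤ (2 + 2 * s) ^ n := one_le_pow₀ (by linarith [hs.1])
  exact le_add_of_nonneg_of_le (mul_nonneg (by linarith [ha.1]) hsub)
    (le_mul_of_one_le_right (by linarith [ha.2]) hadd)

theorem abs_log_starPowNormSq_le (n : ℕ) {s a : ℝ} (hs : s ∈ Set.Icc 0 1)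
    (ha : a ∈ Set.Ioo (-1) 1) :
    |log (starPowNormSq n s a)| ≤ n * log 4 + log 2 + |log (1 - a)| := by
  have ha' := Set.Ioo_subset_Icc_self ha
  have hpos : 0 < 1 - a := sub_pos.2 ha.2
  have hlow := log_le_log (by positivity) (one_sub_div_two_le_starPowNormSq (n := n) hs ha')
  have hupp := log_le_log (lt_of_lt_of_le (by positivity) (one_sub_div_two_le_starPowNormSq hs ha'))
    (starPowNormSq_le (n := n) hs ha')
  rw [log_div hpos.ne' two_ne_zero] at hlow
  rw [log_pow] at hupp
  have hlog2 : 0 ≤ log 2 := log_nonneg one_le_two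
  have hlog4 : 0 ≤ n * log 4 := mul_nonneg n.cast_nonneg (log_nonneg (by norm_num))
  rw [abs_le]
  constructor
  · linarith [neg_abs_le (log (1 - a))]
  · linarith [abs_nonneg (log (1 - a))]

theorem integrableOn_cos_sq_mul_log_starPowNormSq (n : ℕ) :
    IntegrableOn (fun x : ℝ × ℝ => cos x.1 ^ 2 * (2⁻¹ * log (starPowNormSq n (cos x.1) x.2)))
      (Set.Ioo (-(π / 2)) (π / 2) ×ˢ Set.Ioo (-1) 1) := by
  have hbound : IntegrableOn (fun x : ℝ × ℝ => n * log 4 + log 2 + |log (1 - x.2)|)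
      (Set.Ioo (-(π / 2)) (π / 2) ×ˢ Set.Ioo (-1) 1) := by
    rw [IntegrableOn, Measure.volume_eq_prod, ← Measure.prod_restrict]
    exact (integrable_const _).add
      (Integrable.comp_snd (f := fun a => |log (1 - a)|) integrableOn_log_one_sub.abs _)
  refine hbound.mono' (Measurable.aestronglyMeasurable (by unfold starPowNormSq; fun_prop)) ?_
  filter_upwards [ae_restrict_mem (measurableSet_Ioo.prod measurableSet_Ioo)] with x hx
  have hlog := abs_log_starPowNormSq_le n ⟨(cos_pos_of_mem_Ioo hx.1).le, cos_le_one _⟩ hx.2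
  calc ‖cos x.1 ^ 2 * (2⁻¹ * log (starPowNormSq n (cos x.1) x.2))‖
      = cos x.1 ^ 2 * 2⁻¹ * |log (starPowNormSq n (cos x.1) x.2)| := by
        rw [← mul_assoc, norm_mul, norm_of_nonneg (by positivity), norm_eq_abs]
    _ ≤ |log (starPowNormSq n (cos x.1) x.2)| :=
        mul_le_of_le_one_left (abs_nonneg _) (by linarith [cos_sq_le_one x.1])
    _ ≤ n * log 4 + log 2 + |log (1 - x.2)| := hlog

theorem setIntegral_Ioo_mul_log_starPowNormSq (n : ℕ) (φ : ℝ) :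
    ∫ a in Set.Ioo (-1) 1, cos φ ^ 2 * (2⁻¹ * log (starPowNormSq n (cos φ) a)) =
      cos φ ^ 2 * logMeanStarPow n (cos φ) := by
  rw [logMeanStarPow, integral_const_mul, integral_const_mul,
    intervalIntegral.integral_of_le (by norm_num), integral_Ioc_eq_integral_Ioo]

theorem integrableOn_cos_sq_mul_logMeanStarPow (n : ℕ) :
    IntegrableOn (fun φ => cos φ ^ 2 * logMeanStarPow n (cos φ))
      (Set.Ioo (-(π / 2)) (π / 2)) := by
  have h := integrableOn_cos_sq_mul_log_starPowNormSq n
  rw [IntegrableOn, Measure.volume_eq_prod, ← Measure.prod_restrict] at h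
  simpa only [IntegrableOn, setIntegral_Ioo_mul_log_starPowNormSq] using h.integral_prod_left

theorem mahlerH_sliceEval_X_sub_C_I_pow (n : ℕ) :
    mahlerH (sliceEval ((X - C Complex.I) ^ n)) =
      π⁻¹ * ∫ φ in Set.Ioo (-(π / 2)) (π / 2), cos φ ^ 2 * logMeanStarPow n (cos φ) := by
  let g : ℝ × ℝ → ℝ := fun x =>
    2⁻¹ * log (starPowNormSq n √(1 - x.1 ^ 2) (x.2 / √(1 - x.1 ^ 2)))
  have hg : Measurable g := by
    unfold g starPowNormSq
    fun_prop
  have hlog (q : Metric.sphere (0 : ℍ) 1) :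
      log ‖sliceEval ((X - C Complex.I) ^ n) q‖ = g (reImI q) :=
    log_norm_sliceEval_X_sub_C_I_pow n (norm_eq_of_mem_sphere q)
  have hcoord : Set.EqOn (fun x : ℝ × ℝ => cos x.1 ^ 2 * g (sin x.1, cos x.1 * x.2))
      (fun x => cos x.1 ^ 2 * (2⁻¹ * log (starPowNormSq n (cos x.1) x.2)))
      (Set.Ioo (-(π / 2)) (π / 2) ×ˢ Set.Ioo (-1) 1) := fun x hx => by
    have hcos := cos_pos_of_mem_Ioo hx.1
    simp only [g, ← cos_sq', sqrt_sq hcos.le, mul_div_cancel_left₀ _ hcos.ne']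
  rw [mahlerH, integral_congr_ae (ae_of_all _ hlog), integral_reImI_muH hg,
    setIntegral_congr_fun (measurableSet_Ioo.prod measurableSet_Ioo) hcoord,
    Measure.volume_eq_prod, setIntegral_prod _ (integrableOn_cos_sq_mul_log_starPowNormSq n)]
  simp only [setIntegral_Ioo_mul_log_starPowNormSq]

theorem setIntegral_Ioo_neg_comp_abs (f : ℝ → ℝ) (r : ℝ) :
    ∫ x in Set.Ioo (-r) r, f |x| = 2 * ∫ x in Set.Ioo 0 r, f x := by
  have hfull := integral_comp_abs (f := (Set.Iio r).indicator f)
  have hindicator : (fun x => (Set.Iio r).indicator f |x|) =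
      (Set.Ioo (-r) r).indicator fun x => f |x| := by
    ext x
    simp only [Set.indicator_apply, Set.mem_Iio, Set.mem_Ioo, abs_lt]
  rwa [hindicator, integral_indicator measurableSet_Ioo, setIntegral_indicator measurableSet_Iio,
    Set.Ioi_inter_Iio] at hfull

theorem integral_cos_sq_mul_logMeanStarPow_sub {n : ℕ} (hn : n ≠ 0) :
    ∫ φ in (0)..(π / 2), cos φ ^ 2 *
        (logMeanStarPow n (cos φ) - n * log (2 * sin φ) + 1) =
      (n : ℝ) * ∫ t in Set.Ioi (0 : ℝ),
        t * (cosh (n * t) / sinh (n * t)) * tanh t ^ 2 * (1 / cosh t) := by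
  rw [intervalIntegral.integral_of_le (by positivity), integral_Ioc_eq_integral_Ioo,
    setIntegral_Ioo_zero_pi_div_two_eq_setIntegral_Ioi, ← integral_const_mul]
  refine setIntegral_congr_fun measurableSet_Ioi fun t ht => ?_
  simp only [cos_parallelAngle, sin_parallelAngle, logMeanStarPow_tanh hn (ne_of_gt ht),
    mul_one_div]
  ring

theorem integral_cos_sq_mul_logMeanStarPow {n : ℕ} (hn : n ≠ 0) :
    ∫ φ in Set.Ioo 0 (π / 2), cos φ ^ 2 * logMeanStarPow n (cos φ) =
      n * (∫ t in Set.Ioi (0 : ℝ), t * (cosh (n * t) / sinh (n * t)) * tanh t ^ 2 * (1 / cosh t)) -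
        n * π / 8 - π / 4 := by
  have hmean : IntervalIntegrable (fun φ => cos φ ^ 2 * logMeanStarPow n (cos φ)) volume
      0 (π / 2) := by
    rw [intervalIntegrable_iff_integrableOn_Ioo_of_le (by positivity)]
    exact (integrableOn_cos_sq_mul_logMeanStarPow n).mono_set
      (Set.Ioo_subset_Ioo_left (by linarith [pi_pos]))
  have hlog := (intervalIntegrable_cos_sq_mul_log_two_mul_sin 0 (π / 2)).const_mul (n : ℝ)
  have hcos : ∫ φ in (0)..(π / 2), cos φ ^ 2 = π / 4 := by
    rw [integral_cos_sq, cos_pi_div_two, sin_zero]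
    ring
  have hsplit : ∫ φ in (0)..(π / 2), cos φ ^ 2 *
        (logMeanStarPow n (cos φ) - n * log (2 * sin φ) + 1) =
      (∫ φ in (0)..(π / 2), cos φ ^ 2 * logMeanStarPow n (cos φ)) -
        n * (∫ φ in (0)..(π / 2), cos φ ^ 2 * log (2 * sin φ)) +
        ∫ φ in (0)..(π / 2), cos φ ^ 2 := by
    rw [← intervalIntegral.integral_const_mul, ← intervalIntegral.integral_sub hmean hlog,
      ← intervalIntegral.integral_add (hmean.sub hlog) (intervalIntegrable_cos_sq _ _)]
    congr 1 with φ
    ring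
  rw [integral_cos_sq_mul_logMeanStarPow_sub hn, integral_cos_sq_mul_log_two_mul_sin, hcos,
    intervalIntegral.integral_of_le (by positivity), integral_Ioc_eq_integral_Ioo] at hsplit
  linarith

end Mahler

/-- `m_ℍ((x - i)^{∗n})` as an explicit integral. -/
theorem mahlerH_star_pow_sub_i (n : ℕ) (hn : 1 ≤ n) :
    mahlerH (fun q => ∑ k ∈ Finset.range (n + 1),
        (n.choose k : Quaternion ℝ) * q ^ k * (-qI) ^ (n - k)) =
      (2 * n / Real.pi) *
        (∫ t in Set.Ioi (0 : ℝ),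
          t * (Real.cosh (n * t) / Real.sinh (n * t)) * Real.tanh t ^ 2 * (1 / Real.cosh t))
      - (n + 2) / 4 := by
  have heven := setIntegral_Ioo_neg_comp_abs
    (fun φ => Real.cos φ ^ 2 * logMeanStarPow n (Real.cos φ)) (Real.pi / 2)
  simp only [Real.cos_abs] at heven
  simp only [← sliceEval_X_sub_C_I_pow]
  rw [mahlerH_sliceEval_X_sub_C_I_pow, heven,
    integral_cos_sq_mul_logMeanStarPow (Nat.one_le_iff_ne_zero.1 hn)]
  have := Real.pi_ne_zero
  field_simp
  ring
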